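/- arXiv:1609.04435 — 6 statements merged into one kernel-verified Lean document; each statement's English description precedes it below -/
import Mathlib

section
/- Let ε > 0, let I ⊂ ℝ be an open interval, and let A, B : ℝ → ℝ be twice differentiable functions satisfying the Airy equation A''(x) = x·A(x) and B''(x) = x·B(x) for all x ∈ ℝ. Let k ∈ ℝ, let μ : I → ℝ be continuous, let Q : I → (0, ∞) be twice differentiable, and let η : I → ℝ be differentiable with η'(z) = ε^{−2/3} Q(z)^{−2} and η(z) = ε^{−2/3} Q(z)⁴ (k² − μ(z)²) for all z ∈ I. Fix θ ∈ ℝ and define M₁₁(z) = ε^{−1/6} √π Q(z) e^{iθ} [ A(−η(z)) − i·B(−η(z)) ] and M₂₁(z) = −iε · M₁₁'(z). Then for all z ∈ I: (i) M₁₁'(z) = (i/ε) M₂₁(z), and (ii) M₂₁'(z) = (i/ε)(k² − μ(z)²) M₁₁(z) − iε (Q''(z)/Q(z)) M₁₁(z). -/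
open MeasureTheory Real Complex

/-- First derivative of `Q · F(-η)` when `η' = s / Q²`. -/
lemma hasDerivAt_mul_comp_neg {F F' Q η : ℝ → ℝ} {s q' z : ℝ}
    (hF : ∀ x, HasDerivAt F (F' x) x) (hQz : Q z ≠ 0) (hQ : HasDerivAt Q q' z)
    (hη : HasDerivAt η (s * (Q z ^ 2)⁻¹) z) :
    HasDerivAt (fun t => Q t * F (-η t)) (q' * F (-η z) - s * (Q z)⁻¹ * F' (-η z)) z := by
  have hcomp : HasDerivAt (fun t => F (-η t)) (F' (-η z) * -(s * (Q z ^ 2)⁻¹)) z :=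
    (hF (-η z)).comp z hη.neg
  refine (hQ.mul hcomp).congr_deriv ?_
  field_simp
  ring

/-- Second derivative of `Q · F(-η)` when `F` solves the Airy equation, `η' = s / Q²` and
`η = s Q⁴ p`. -/
lemma hasDerivAt_deriv_mul_comp_neg {F F' Q Q' η : ℝ → ℝ} {s p q'' z : ℝ}
    (hF : ∀ x, HasDerivAt F (F' x) x) (hF' : ∀ x, HasDerivAt F' (x * F x) x)
    (hQz : Q z ≠ 0) (hQ : HasDerivAt Q (Q' z) z) (hQ' : HasDerivAt Q' q'' z)
    (hη : HasDerivAt η (s * (Q z ^ 2)⁻¹) z) (hηz : η z = s * Q z ^ 4 * p) :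
    HasDerivAt (fun t => Q' t * F (-η t) - s * (Q t)⁻¹ * F' (-η t))
      ((q'' / Q z - s ^ 3 * p) * (Q z * F (-η z))) z := by
  have hcomp : HasDerivAt (fun t => F (-η t)) (F' (-η z) * -(s * (Q z ^ 2)⁻¹)) z :=
    (hF (-η z)).comp z hη.neg
  have hcomp' : HasDerivAt (fun t => F' (-η t))
      (-η z * F (-η z) * -(s * (Q z ^ 2)⁻¹)) z :=
    (hF' (-η z)).comp z hη.neg
  refine ((hQ'.mul hcomp).sub (((hQ.inv hQz).const_mul s).mul hcomp')).congr_deriv ?_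
  generalize F (-η z) = u
  generalize F' (-η z) = v
  rw [hηz]
  simp only [Pi.inv_apply]
  field_simp
  ring

/-- Lemma 1, part 1: the WKB approximation of the propagator, built from
solutions `A`, `B` of the Airy equation, satisfies the propagator equation up to the
correction term `−iε (Q''/Q) M₁₁`. -/
theorem wkb_propagator_equation
    (ε : ℝ) (hε : 0 < ε) (a b : ℝ)
    (A B A' B' : ℝ → ℝ)
    (hA : ∀ x, HasDerivAt A (A' x) x) (hA' : ∀ x, HasDerivAt A' (x * A x) x)
    (hB : ∀ x, HasDerivAt B (B' x) x) (hB' : ∀ x, HasDerivAt B' (x * B x) x)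
    (k : ℝ) (μ Q Q' Q'' η : ℝ → ℝ)
    (hμ : ContinuousOn μ (Set.Ioo a b))
    (hQpos : ∀ z ∈ Set.Ioo a b, 0 < Q z)
    (hQ : ∀ z ∈ Set.Ioo a b, HasDerivAt Q (Q' z) z)
    (hQ' : ∀ z ∈ Set.Ioo a b, HasDerivAt Q' (Q'' z) z)
    (hη : ∀ z ∈ Set.Ioo a b, HasDerivAt η (ε ^ (-(2 : ℝ) / 3) * (Q z ^ 2)⁻¹) z)
    (hηval : ∀ z ∈ Set.Ioo a b,
      η z = ε ^ (-(2 : ℝ) / 3) * Q z ^ 4 * (k ^ 2 - μ z ^ 2))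
    (θ : ℝ) (M₁₁ M₂₁ : ℝ → ℂ)
    (hM₁₁ : ∀ z, M₁₁ z =
      ((ε ^ (-(1 : ℝ) / 6) * Real.sqrt Real.pi * Q z : ℝ) : ℂ) *
        Complex.exp (Complex.I * (θ : ℂ)) *
        ((A (-η z) : ℂ) - Complex.I * (B (-η z) : ℂ)))
    (hM₂₁ : ∀ z, M₂₁ z = -Complex.I * (ε : ℂ) * deriv M₁₁ z) :
    ∀ z ∈ Set.Ioo a b,
      deriv M₁₁ z = (Complex.I / (ε : ℂ)) * M₂₁ z ∧
      deriv M₂₁ z =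
        (Complex.I / (ε : ℂ)) * ((k : ℂ) ^ 2 - (μ z : ℂ) ^ 2) * M₁₁ z -
          Complex.I * (ε : ℂ) * ((Q'' z / Q z : ℝ) : ℂ) * M₁₁ z := by
  have hεC : (ε : ℂ) ≠ 0 := by exact_mod_cast hε.ne'
  set s : ℝ := ε ^ (-(2 : ℝ) / 3) with hs
  have hs3 : s ^ 3 = (ε ^ 2)⁻¹ := by
    rw [hs, ← Real.rpow_natCast, ← Real.rpow_mul hε.le, ← Real.rpow_natCast,
      ← Real.rpow_neg hε.le]
    norm_num
  set c : ℂ := ((ε ^ (-(1 : ℝ) / 6) * Real.sqrt Real.pi : ℝ) : ℂ) *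
    Complex.exp (Complex.I * (θ : ℂ)) with hc
  have hM : M₁₁ = fun t => c * (((Q t * A (-η t) : ℝ) : ℂ) -
      Complex.I * ((Q t * B (-η t) : ℝ) : ℂ)) := by
    funext t
    rw [hM₁₁ t, hc]
    push_cast
    ring
  let N : ℝ → ℂ := fun t =>
    c * (((Q' t * A (-η t) - s * (Q t)⁻¹ * A' (-η t) : ℝ) : ℂ) -
      Complex.I * ((Q' t * B (-η t) - s * (Q t)⁻¹ * B' (-η t) : ℝ) : ℂ))
  have hderiv : ∀ t ∈ Set.Ioo a b, deriv M₁₁ t = N t := by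
    intro t ht
    have hQt := (hQpos t ht).ne'
    rw [hM]
    exact (((hasDerivAt_mul_comp_neg hA hQt (hQ t ht) (hη t ht)).ofReal_comp.sub
      ((hasDerivAt_mul_comp_neg hB hQt (hQ t ht) (hη t ht)).ofReal_comp.const_mul
        Complex.I)).const_mul c).deriv
  intro z hz
  have hQz := (hQpos z hz).ne'
  refine ⟨?_, ?_⟩
  · rw [hM₂₁ z]
    field_simp
    rw [Complex.I_sq]
    ring
  · have hN : HasDerivAt N (((Q'' z / Q z - s ^ 3 * (k ^ 2 - μ z ^ 2) : ℝ) : ℂ) * M₁₁ z) z := by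
      refine (((hasDerivAt_deriv_mul_comp_neg hA hA' hQz (hQ z hz) (hQ' z hz) (hη z hz)
        (hηval z hz)).ofReal_comp.sub
        ((hasDerivAt_deriv_mul_comp_neg hB hB' hQz (hQ z hz) (hQ' z hz) (hη z hz)
        (hηval z hz)).ofReal_comp.const_mul Complex.I)).const_mul c).congr_deriv ?_
      rw [hM]
      push_cast
      ring
    have hM₂₁N : M₂₁ =ᶠ[nhds z] fun t => -Complex.I * (ε : ℂ) * N t := by
      filter_upwards [isOpen_Ioo.mem_nhds hz] with t ht
      rw [hM₂₁ t, hderiv t ht]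
    rw [hM₂₁N.deriv_eq, (hN.const_mul _).deriv, hs3]
    push_cast
    field_simp
    ring
end

section
/- Let ε > 0, let I ⊂ ℝ be an open interval, and let A, B : ℝ → ℝ be differentiable functions satisfying the Wronskian identity A(x)·B'(x) − A'(x)·B(x) = 1/π for all x ∈ ℝ. Let Q : I → (0, ∞) be differentiable and let η : I → ℝ be differentiable with η'(z) = ε^{−2/3} Q(z)^{−2} for all z ∈ I. Fix θ ∈ ℝ and define M₁₁(z) = ε^{−1/6} √π Q(z) e^{iθ} [ A(−η(z)) − i·B(−η(z)) ] and M₂₁(z) = −iε · M₁₁'(z). Then the determinant of the 2×2 complex matrix with rows (M₁₁(z), −conj(M₁₁(z))) and (M₂₁(z), conj(M₂₁(z))) equals 2 for every z ∈ I; equivalently, 2·Re[ M₁₁(z) · conj(M₂₁(z)) ] = 2. -/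
open MeasureTheory Real Complex

/-- For `M = q e (u - i v)` with `q, u, v` real-valued and `e` a unimodular constant,
`Re (M · conj (-i ε M'))` is `-ε q²` times the Wronskian `u v' - u' v`. -/
theorem re_mul_conj_neg_I_mul_deriv {q u v : ℝ → ℝ} {q' u' v' z : ℝ} {e : ℂ} (ε : ℝ)
    (he : e.re ^ 2 + e.im ^ 2 = 1)
    (hq : HasDerivAt q q' z) (hu : HasDerivAt u u' z) (hv : HasDerivAt v v' z) :
    (((q z : ℂ) * e * ((u z : ℂ) - Complex.I * (v z : ℂ))) *
      (starRingEnd ℂ) (-Complex.I * (ε : ℂ) *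
        deriv (fun t => (q t : ℂ) * e * ((u t : ℂ) - Complex.I * (v t : ℂ))) z)).re =
      -(ε * q z ^ 2 * (u z * v' - u' * v z)) := by
  have hd := (hq.ofReal_comp.mul_const e).mul
    (hu.ofReal_comp.sub (hv.ofReal_comp.const_mul Complex.I))
  have hd' : deriv (fun t => (q t : ℂ) * e * ((u t : ℂ) - Complex.I * (v t : ℂ))) z = _ :=
    hd.deriv
  rw [hd']
  simp
  linear_combination (-(ε * q z ^ 2 * (u z * v' - u' * v z))) * he

/-- Lemma 1, part 2: the WKB approximation of the propagator, built from
functions `A`, `B` with constant Wronskian `A B' − A' B = 1/π`, has determinant 2;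
equivalently `2 Re[M₁₁ conj(M₂₁)] = 2`. -/
theorem wkb_propagator_determinant
    (ε : ℝ) (hε : 0 < ε) (a b : ℝ)
    (A B A' B' : ℝ → ℝ)
    (hA : ∀ x, HasDerivAt A (A' x) x) (hB : ∀ x, HasDerivAt B (B' x) x)
    (hW : ∀ x, A x * B' x - A' x * B x = 1 / Real.pi)
    (Q Q' η : ℝ → ℝ)
    (hQpos : ∀ z ∈ Set.Ioo a b, 0 < Q z)
    (hQ : ∀ z ∈ Set.Ioo a b, HasDerivAt Q (Q' z) z)
    (hη : ∀ z ∈ Set.Ioo a b, HasDerivAt η (ε ^ (-(2 : ℝ) / 3) * (Q z ^ 2)⁻¹) z)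
    (θ : ℝ) (M₁₁ M₂₁ : ℝ → ℂ)
    (hM₁₁ : ∀ z, M₁₁ z =
      ((ε ^ (-(1 : ℝ) / 6) * Real.sqrt Real.pi * Q z : ℝ) : ℂ) *
        Complex.exp (Complex.I * (θ : ℂ)) *
        ((A (-η z) : ℂ) - Complex.I * (B (-η z) : ℂ)))
    (hM₂₁ : ∀ z, M₂₁ z = -Complex.I * (ε : ℂ) * deriv M₁₁ z) :
    ∀ z ∈ Set.Ioo a b,
      Matrix.det !![M₁₁ z, -(starRingEnd ℂ) (M₁₁ z); M₂₁ z, (starRingEnd ℂ) (M₂₁ z)] = 2 ∧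
      2 * (M₁₁ z * (starRingEnd ℂ) (M₂₁ z)).re = 2 := by
  intro z hz
  have hre : (M₁₁ z * (starRingEnd ℂ) (M₂₁ z)).re = 1 := by
    have hunit : (Complex.exp (Complex.I * (θ : ℂ))).re ^ 2 +
        (Complex.exp (Complex.I * (θ : ℂ))).im ^ 2 = 1 := by
      simp [Complex.exp_re, Complex.exp_im]
    have hpow : ε * (ε ^ (-(1 : ℝ) / 6)) ^ 2 * ε ^ (-(2 : ℝ) / 3) = 1 := by
      nth_rewrite 1 [← Real.rpow_one ε]
      rw [← Real.rpow_natCast, ← Real.rpow_mul hε.le, ← Real.rpow_add hε, ← Real.rpow_add hε]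
      norm_num
    have hsqrt : Real.sqrt Real.pi ^ 2 = Real.pi := Real.sq_sqrt Real.pi_pos.le
    have hQz : Q z ^ 2 * (Q z ^ 2)⁻¹ = 1 := mul_inv_cancel₀ (pow_pos (hQpos z hz) 2).ne'
    have hpi : Real.pi * (1 / Real.pi) = 1 := mul_one_div_cancel Real.pi_ne_zero
    have key := re_mul_conj_neg_I_mul_deriv ε hunit
      ((hQ z hz).const_mul (ε ^ (-(1 : ℝ) / 6) * Real.sqrt Real.pi))
      ((hA (-η z)).comp z (hη z hz).neg) ((hB (-η z)).comp z (hη z hz).neg)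
    rw [hM₂₁, funext hM₁₁]
    refine key.trans ?_
    simp only [Function.comp_apply, Pi.neg_apply]
    calc _ = (ε * (ε ^ (-(1 : ℝ) / 6)) ^ 2 * ε ^ (-(2 : ℝ) / 3)) * Real.sqrt Real.pi ^ 2 *
          (Q z ^ 2 * (Q z ^ 2)⁻¹) * (A (-η z) * B' (-η z) - A' (-η z) * B (-η z)) := by ring
      _ = 1 := by rw [hpow, hsqrt, hQz, hW, one_mul, mul_one, hpi]
  refine ⟨?_, by rw [hre, mul_one]⟩
  have hdet : Matrix.det !![M₁₁ z, -(starRingEnd ℂ) (M₁₁ z); M₂₁ z, (starRingEnd ℂ) (M₂₁ z)] =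
      M₁₁ z * (starRingEnd ℂ) (M₂₁ z) +
        (starRingEnd ℂ) (M₁₁ z * (starRingEnd ℂ) (M₂₁ z)) := by
    rw [Matrix.det_fin_two_of, map_mul, Complex.conj_conj]
    ring
  rw [hdet, Complex.add_conj, hre]
  norm_num
end

section
/- Let k > 0, z_T < 0, and let μ : [z_T, 0] → ℝ be continuous with μ(z_T) = k and μ(z) < k for z ∈ (z_T, 0]. Define φ(z) = ∫_{z_T}^z √(k² − μ(z')²) dz' and Q(z) = (3φ(z)/2)^{1/6} / (k² − μ(z)²)^{1/4} for z ∈ (z_T, 0]. Assume moreover that z ↦ μ(z)² is continuously differentiable on a neighborhood of z_T with γ := −(d/dz)[μ²](z_T) > 0. Then lim_{z → z_T⁺} Q(z) = γ^{−1/6}. -/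
open MeasureTheory Real Filter

/-- The slope of `f` at a zero `a`, from the right. -/
theorem tendsto_div_sub_nhdsGT_of_hasDerivAt {f : ℝ → ℝ} {a γ : ℝ}
    (hf : HasDerivAt f γ a) (hfa : f a = 0) :
    Tendsto (fun z => f z / (z - a)) (nhdsWithin a (Set.Ioi a)) (nhds γ) := by
  have h := (hasDerivAt_iff_tendsto_slope.1 hf).mono_left
    (nhdsWithin_mono a fun z (hz : z ∈ Set.Ioi a) => ne_of_gt hz)
  simpa only [slope_fun_def_field, hfa, sub_zero] using h

/-- Near a simple zero `a` of `f`, the primitive of `√f` behaves like `(2/3) √γ (z - a)^{3/2}`. -/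
theorem tendsto_integral_sqrt_div_rpow_nhdsGT {f : ℝ → ℝ} {a b γ : ℝ} (hab : a < b)
    (hfc : ContinuousOn f (Set.Icc a b)) (hfa : f a = 0) (hf : HasDerivAt f γ a) :
    Tendsto (fun z => (∫ t in a..z, √(f t)) / (z - a) ^ ((3 : ℝ) / 2))
      (nhdsWithin a (Set.Ioi a)) (nhds (2 / 3 * √γ)) := by
  have hc : ContinuousOn (fun t => √(f t)) (Set.Icc a b) := hfc.sqrt
  have hint : IntervalIntegrable (fun t => √(f t)) volume a b :=
    hc.intervalIntegrable_of_Icc hab.le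
  refine HasDerivAt.lhopital_zero_right_on_Ioo (f' := fun z => √(f z))
    (g' := fun z => 3 / 2 * √(z - a)) hab ?_ ?_ ?_ ?_ ?_ ?_
  · intro z hz
    have hnhds : Set.Icc a b ∈ nhds z := Icc_mem_nhds hz.1 hz.2
    refine intervalIntegral.integral_hasDerivAt_right
      (hint.mono_set ?_) ?_ (hc.continuousAt hnhds)
    · rw [Set.uIcc_of_le hz.1.le, Set.uIcc_of_le hab.le]
      exact Set.Icc_subset_Icc_right hz.2.le
    · exact (hc.mono Set.Ioo_subset_Icc_self).stronglyMeasurableAtFilter isOpen_Ioo z hz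
  · intro z hz
    have h := ((hasDerivAt_id z).sub_const a).rpow_const (p := (3 : ℝ) / 2)
      (Or.inl (sub_pos.2 hz.1).ne')
    simp only [id, one_mul, show (3 : ℝ) / 2 - 1 = 1 / 2 by norm_num,
      ← Real.sqrt_eq_rpow] at h
    exact h
  · intro z hz
    have := Real.sqrt_pos.2 (sub_pos.2 hz.1)
    positivity
  · have h := intervalIntegral.continuousOn_primitive_interval' hint Set.left_mem_uIcc
      a Set.left_mem_uIcc
    rw [ContinuousWithinAt, intervalIntegral.integral_same, Set.uIcc_of_le hab.le] at h
    exact h.mono_left (nhdsWithin_le_of_mem (Icc_mem_nhdsGT hab))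
  · have h : ContinuousAt (fun z : ℝ => (z - a) ^ ((3 : ℝ) / 2)) a :=
      (continuousAt_id.sub continuousAt_const).rpow_const (Or.inr (by norm_num))
    rw [ContinuousAt, sub_self, Real.zero_rpow (by norm_num)] at h
    exact h.mono_left nhdsWithin_le_nhds
  · refine ((tendsto_div_sub_nhdsGT_of_hasDerivAt hf hfa).sqrt.const_mul (2 / 3)).congr' ?_
    filter_upwards [self_mem_nhdsWithin] with z hz
    have hz' : 0 < z - a := sub_pos.2 hz
    have := Real.sqrt_pos.2 hz'
    rw [Real.sqrt_div' _ hz'.le]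
    field_simp

/-- at a simple turning point with `γ = −(μ²)'(z_T) > 0`, the WKB amplitude
factor `Q(z) = (3φ(z)/2)^{1/6}/(k²−μ(z)²)^{1/4}` has the limit `γ^{−1/6}` as `z → z_T⁺`. -/
theorem wkb_amplitude_limit_at_turning_point
    (k zT : ℝ) (hk : 0 < k) (hzT : zT < 0)
    (μ : ℝ → ℝ) (hμc : ContinuousOn μ (Set.Icc zT 0))
    (hμT : μ zT = k) (hμlt : ∀ z ∈ Set.Ioc zT 0, μ z < k)
    (φ Q : ℝ → ℝ)
    (hφ : ∀ z, φ z = ∫ z' in zT..z, Real.sqrt (k ^ 2 - μ z' ^ 2))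
    (hQ : ∀ z ∈ Set.Ioc zT 0,
      Q z = (3 * φ z / 2) ^ ((1 : ℝ) / 6) / (k ^ 2 - μ z ^ 2) ^ ((1 : ℝ) / 4))
    (hμ2 : ContDiffAt ℝ 1 (fun z => μ z ^ 2) zT)
    (γ : ℝ) (hγ : γ = -deriv (fun z => μ z ^ 2) zT) (hγpos : 0 < γ) :
    Tendsto Q (nhdsWithin zT (Set.Ioi zT)) (nhds (γ ^ (-(1 : ℝ) / 6))) := by
  have hderiv : HasDerivAt (fun z => k ^ 2 - μ z ^ 2) γ zT := by
    rw [hγ]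
    exact (hμ2.differentiableAt one_ne_zero).hasDerivAt.const_sub (k ^ 2)
  have hzero : k ^ 2 - μ zT ^ 2 = 0 := by rw [hμT, sub_self]
  have hslope := tendsto_div_sub_nhdsGT_of_hasDerivAt hderiv hzero
  have hphase := tendsto_integral_sqrt_div_rpow_nhdsGT (f := fun z => k ^ 2 - μ z ^ 2) hzT
    (continuousOn_const.sub (hμc.pow 2)) hzero hderiv
  have hlim := ((hphase.const_mul (3 / 2)).rpow_const (p := (1 : ℝ) / 6)
    (Or.inr (by norm_num))).div
    (hslope.rpow_const (p := (1 : ℝ) / 4) (Or.inr (by norm_num)))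
    (Real.rpow_pos_of_pos hγpos _).ne'
  have hval : (3 / 2 * (2 / 3 * √γ)) ^ ((1 : ℝ) / 6) / γ ^ ((1 : ℝ) / 4)
      = γ ^ (-(1 : ℝ) / 6) := by
    rw [← mul_assoc, show (3 / 2 * (2 / 3) : ℝ) = 1 by norm_num, one_mul, Real.sqrt_eq_rpow,
      ← Real.rpow_mul hγpos.le, ← Real.rpow_sub hγpos]
    norm_num
  rw [hval] at hlim
  refine hlim.congr' ?_
  filter_upwards [Ioc_mem_nhdsGT hzT, hslope.eventually_const_lt hγpos] with z hz hpos
  have hs : 0 < z - zT := sub_pos.2 hz.1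
  have hf : 0 < k ^ 2 - μ z ^ 2 := (div_pos_iff_of_pos_right hs).1 hpos
  have hφ0 : 0 ≤ φ z := by
    rw [hφ]
    exact intervalIntegral.integral_nonneg hz.1.le fun _ _ => Real.sqrt_nonneg _
  have hs' := Real.rpow_pos_of_pos hs ((1 : ℝ) / 4)
  rw [hQ z hz, Pi.div_apply, ← hφ, ← mul_div_assoc,
    Real.div_rpow (by positivity) (Real.rpow_nonneg hs.le _), ← Real.rpow_mul hs.le,
    Real.div_rpow hf.le hs.le, show (3 : ℝ) / 2 * (1 / 6) = 1 / 4 by norm_num,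
    div_div_div_cancel_right₀ hs'.ne', mul_div_right_comm]
end

section
/- Let k > 0, z_T < 0, and let μ : [z_T, 0] → ℝ be continuous with μ(z_T) = k and μ(z) < k for z ∈ (z_T, 0]. Define φ(z) = ∫_{z_T}^z √(k² − μ(z')²) dz' and Q(z) = (3φ(z)/2)^{1/6} / (k² − μ(z)²)^{1/4} for z ∈ (z_T, 0]. Assume moreover that z ↦ μ(z)² is twice continuously differentiable on a neighborhood of z_T, with γ := −(d/dz)[μ²](z_T) > 0 and θ := (1/2)(d²/dz²)[μ²](z_T). Then the derivative Q' extends continuously to the turning point with lim_{z → z_T⁺} Q'(z) = θ / (5 γ^{7/6}). -/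
open MeasureTheory Real Filter

open scoped Topology

/-- The derivative of `(z - a) ^ p` to the right of `a`. -/
lemma hasDerivAt_sub_rpow {a z : ℝ} (hz : a < z) (p : ℝ) :
    HasDerivAt (fun y => (y - a) ^ p) (p * (z - a) ^ (p - 1)) z := by
  simpa using ((hasDerivAt_id z).sub_const a).rpow_const (p := p) (Or.inl (sub_pos.2 hz).ne')

lemma tendsto_sub_rpow_nhdsGT {a p : ℝ} (hp : 0 < p) :
    Tendsto (fun y => (y - a) ^ p) (𝓝[>] a) (𝓝 0) := by
  have h : ContinuousAt (fun y : ℝ => (y - a) ^ p) a :=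
    (continuousAt_id.sub continuousAt_const).rpow_const (Or.inr hp.le)
  have h' := h.tendsto
  rw [sub_self, zero_rpow hp.ne'] at h'
  exact h'.mono_left nhdsWithin_le_nhds

/-- L'Hôpital's rule against the power `(z - a) ^ p`, `p > 0`. -/
lemma tendsto_div_sub_rpow_of_hasDerivAt {F F' : ℝ → ℝ} {a p c : ℝ} (hp : 0 < p)
    (hF : ∀ᶠ z in 𝓝[>] a, HasDerivAt F (F' z) z) (hF0 : Tendsto F (𝓝[>] a) (𝓝 0))
    (hF' : Tendsto (fun z => F' z / (z - a) ^ (p - 1)) (𝓝[>] a) (𝓝 c)) :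
    Tendsto (fun z => F z / (z - a) ^ p) (𝓝[>] a) (𝓝 (c / p)) := by
  have hgt : ∀ᶠ z in 𝓝[>] a, a < z := eventually_mem_nhdsWithin
  refine HasDerivAt.lhopital_zero_nhdsGT hF
    (hgt.mono fun z hz => hasDerivAt_sub_rpow hz p) ?_ hF0 (tendsto_sub_rpow_nhdsGT hp) ?_
  · filter_upwards [hgt] with z hz
    have := rpow_pos_of_pos (sub_pos.2 hz) (p - 1)
    positivity
  · refine (hF'.div_const p).congr fun z => ?_
    rw [div_div, mul_comm]

/-- The derivative of `P ^ (1/6) / F ^ (1/4)`, where `P' = (3/2) √F` and `F' = D`, rescaled by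
powers of `S`. -/
lemma amplitude_deriv_rescale {P F S : ℝ} (hP : 0 < P) (hF : 0 < F) (hS : 0 < S) (D : ℝ) :
    (3 / 2 * F ^ (1 / 2 : ℝ) * (1 / 6 : ℝ) * P ^ (1 / 6 - 1 : ℝ) * F ^ (1 / 4 : ℝ)
        - P ^ (1 / 6 : ℝ) * (D * (1 / 4 : ℝ) * F ^ (1 / 4 - 1 : ℝ))) / (F ^ (1 / 4 : ℝ)) ^ 2
      = 1 / 4 * (P / S ^ (3 / 2 : ℝ)) ^ (-5 / 6 : ℝ) * (F / S) ^ (-5 / 4 : ℝ)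
        * ((F ^ (3 / 2 : ℝ) - P * D) / S ^ (5 / 2 : ℝ)) := by
  have root : ∀ {x : ℝ} (n : ℕ), n ≠ 0 → 0 < x → ∃ y, 0 < y ∧ x = y ^ n := fun {x} n hn hx =>
    ⟨x ^ (n⁻¹ : ℝ), rpow_pos_of_pos hx _, (rpow_inv_natCast_pow hx.le hn).symm⟩
  have pow_rpow : ∀ {x : ℝ} (n : ℕ) (r : ℝ), 0 < x → (x ^ n) ^ r = x ^ (n * r) :=
    fun {x} n r hx => by rw [← rpow_natCast, ← rpow_mul hx.le]
  obtain ⟨p, hp, rfl⟩ := root 6 (by norm_num) hP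
  obtain ⟨x, hx, rfl⟩ := root 4 (by norm_num) hF
  obtain ⟨y, hy, rfl⟩ := root 4 (by norm_num) hS
  have e1 : (x ^ 4) ^ (1 / 2 : ℝ) = x ^ 2 := by
    rw [pow_rpow _ _ hx, ← rpow_natCast]; norm_num
  have e2 : (x ^ 4) ^ (1 / 4 : ℝ) = x := by
    rw [pow_rpow _ _ hx]; norm_num
  have e3 : (x ^ 4) ^ (1 / 4 - 1 : ℝ) = (x ^ 3)⁻¹ := by
    rw [pow_rpow _ _ hx, ← rpow_natCast, ← rpow_neg hx.le]; norm_num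
  have e4 : (x ^ 4) ^ (3 / 2 : ℝ) = x ^ 6 := by
    rw [pow_rpow _ _ hx, ← rpow_natCast]; norm_num
  have e5 : (p ^ 6) ^ (1 / 6 : ℝ) = p := by
    rw [pow_rpow _ _ hp]; norm_num
  have e6 : (p ^ 6) ^ (1 / 6 - 1 : ℝ) = (p ^ 5)⁻¹ := by
    rw [pow_rpow _ _ hp, ← rpow_natCast, ← rpow_neg hp.le]; norm_num
  have e7 : (y ^ 4) ^ (3 / 2 : ℝ) = y ^ 6 := by
    rw [pow_rpow _ _ hy, ← rpow_natCast]; norm_num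
  have e8 : (y ^ 4) ^ (5 / 2 : ℝ) = y ^ 10 := by
    rw [pow_rpow _ _ hy, ← rpow_natCast]; norm_num
  have e9 : (p ^ 6 / y ^ 6) ^ (-5 / 6 : ℝ) = ((p / y) ^ 5)⁻¹ := by
    rw [← div_pow, pow_rpow _ _ (div_pos hp hy), ← rpow_natCast, ← rpow_neg (div_pos hp hy).le]
    norm_num
  have e10 : (x ^ 4 / y ^ 4) ^ (-5 / 4 : ℝ) = ((x / y) ^ 5)⁻¹ := by
    rw [← div_pow, pow_rpow _ _ (div_pos hx hy), ← rpow_natCast, ← rpow_neg (div_pos hx hy).le]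
    norm_num
  rw [e7, e9, e10, e1, e2, e3, e4, e5, e6, e8]
  field_simp
  ring

/-- Near a simple zero `a` of `f`, if `Φ' = (3/2) √f` and `Φ → 0` at `a`, then the derivative
of `Φ ^ (1/6) / f ^ (1/4)` tends to `-f''(a) / (10 f'(a) ^ (7/6))`. -/
lemma tendsto_deriv_amplitude {f Φ : ℝ → ℝ} {a γ : ℝ} (hf : ContDiffAt ℝ 2 f a)
    (hfa : f a = 0) (hγ : deriv f a = γ) (hγpos : 0 < γ)
    (hΦ : ∀ᶠ z in 𝓝[>] a, HasDerivAt Φ (3 / 2 * f z ^ (1 / 2 : ℝ)) z)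
    (hΦ0 : Tendsto Φ (𝓝[>] a) (𝓝 0)) :
    Tendsto (deriv fun z => Φ z ^ (1 / 6 : ℝ) / f z ^ (1 / 4 : ℝ)) (𝓝[>] a)
      (𝓝 (-deriv (deriv f) a / (10 * γ ^ (7 / 6 : ℝ)))) := by
  have hgt : ∀ᶠ z in 𝓝[>] a, a < z := eventually_mem_nhdsWithin
  have hfev : ∀ᶠ z in 𝓝[>] a, ContDiffAt ℝ 2 f z :=
    (hf.eventually (by simp)).filter_mono nhdsWithin_le_nhds
  have hf1 : ContDiffAt ℝ 1 (deriv f) a := hf.derivWithin (by norm_num)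
  have hf1ev : ∀ᶠ z in 𝓝[>] a, ContDiffAt ℝ 1 (deriv f) z :=
    (hf1.eventually (by simp)).filter_mono nhdsWithin_le_nhds
  have hf2 : Tendsto (deriv (deriv f)) (𝓝[>] a) (𝓝 (deriv (deriv f) a)) := by
    have : ContDiffAt ℝ 0 (deriv (deriv f)) a := hf1.derivWithin (by norm_num)
    exact this.continuousAt.tendsto.mono_left nhdsWithin_le_nhds
  have hslope : Tendsto (fun z => f z / (z - a)) (𝓝[>] a) (𝓝 γ) := by
    have hd : HasDerivAt f γ a := hγ ▸ (hf.differentiableAt (by norm_num)).hasDerivAt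
    refine ((hasDerivAt_iff_tendsto_slope.1 hd).mono_left
      (nhdsWithin_mono a fun z hz => ne_of_gt hz)).congr fun z => ?_
    rw [slope_def_field, hfa, sub_zero]
  have hfpos : ∀ᶠ z in 𝓝[>] a, 0 < f z := by
    filter_upwards [hgt, hslope.eventually_const_lt hγpos] with z hz h
    exact (div_pos_iff_of_pos_right (sub_pos.2 hz)).1 h
  have hΦlim : Tendsto (fun z => Φ z / (z - a) ^ (3 / 2 : ℝ)) (𝓝[>] a)
      (𝓝 (γ ^ (1 / 2 : ℝ))) := by
    have h : Tendsto (fun z => 3 / 2 * f z ^ (1 / 2 : ℝ) / (z - a) ^ (3 / 2 - 1 : ℝ)) (𝓝[>] a)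
        (𝓝 (3 / 2 * γ ^ (1 / 2 : ℝ))) := by
      refine ((hslope.rpow_const (p := 1 / 2) (Or.inl hγpos.ne')).const_mul (3 / 2)).congr' ?_
      filter_upwards [hgt, hfpos] with z hz hfz
      rw [div_rpow hfz.le (sub_pos.2 hz).le, mul_div_assoc]
      norm_num
    have h' := tendsto_div_sub_rpow_of_hasDerivAt (by norm_num) hΦ hΦ0 h
    rwa [mul_div_cancel_left₀ _ (by norm_num)] at h'
  have hΦpos : ∀ᶠ z in 𝓝[>] a, 0 < Φ z := by
    filter_upwards [hgt, hΦlim.eventually_const_lt (rpow_pos_of_pos hγpos _)] with z hz h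
    exact (div_pos_iff_of_pos_right (rpow_pos_of_pos (sub_pos.2 hz) _)).1 h
  have hNlim : Tendsto (fun z => (f z ^ (3 / 2 : ℝ) - Φ z * deriv f z) / (z - a) ^ (5 / 2 : ℝ))
      (𝓝[>] a) (𝓝 (-(γ ^ (1 / 2 : ℝ) * deriv (deriv f) a) / (5 / 2))) := by
    refine tendsto_div_sub_rpow_of_hasDerivAt (F' := fun z => -(Φ z * deriv (deriv f) z))
      (by norm_num) ?_ ?_ ?_
    · filter_upwards [hfev, hf1ev, hfpos, hΦ] with z h0 h1 hfz hΦz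
      refine (((h0.differentiableAt (by norm_num)).hasDerivAt.rpow_const (p := 3 / 2)
        (Or.inl hfz.ne')).sub
        (hΦz.mul (h1.differentiableAt (by norm_num)).hasDerivAt)).congr_deriv ?_
      rw [show (3 / 2 - 1 : ℝ) = 1 / 2 by norm_num]
      ring
    · have h1 : Tendsto (fun z => f z ^ (3 / 2 : ℝ)) (𝓝[>] a) (𝓝 0) := by
        have := (hf.continuousAt.rpow_const (p := 3 / 2) (Or.inr (by norm_num))).tendsto
        rw [hfa, zero_rpow (by norm_num)] at this
        exact this.mono_left nhdsWithin_le_nhds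
      have h2 : Tendsto (deriv f) (𝓝[>] a) (𝓝 γ) :=
        hγ ▸ hf1.continuousAt.tendsto.mono_left nhdsWithin_le_nhds
      simpa using h1.sub (hΦ0.mul h2)
    · refine (hΦlim.mul hf2).neg.congr fun z => ?_
      rw [show (5 / 2 - 1 : ℝ) = 3 / 2 by norm_num]
      ring
  have hlim := (((hΦlim.rpow_const (p := -5 / 6) (Or.inl (rpow_pos_of_pos hγpos _).ne')).const_mul
    (1 / 4)).mul (hslope.rpow_const (p := -5 / 4) (Or.inl hγpos.ne'))).mul hNlim
  have hval : 1 / 4 * (γ ^ (1 / 2 : ℝ)) ^ (-5 / 6 : ℝ) * γ ^ (-5 / 4 : ℝ)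
      * (-(γ ^ (1 / 2 : ℝ) * deriv (deriv f) a) / (5 / 2))
      = -deriv (deriv f) a / (10 * γ ^ (7 / 6 : ℝ)) := by
    have hpow : (γ ^ (1 / 2 : ℝ)) ^ (-5 / 6 : ℝ) * γ ^ (-5 / 4 : ℝ) * γ ^ (1 / 2 : ℝ)
        = (γ ^ (7 / 6 : ℝ))⁻¹ := by
      rw [← rpow_mul hγpos.le, ← rpow_add hγpos, ← rpow_add hγpos, ← rpow_neg hγpos.le]
      norm_num
    rw [div_eq_mul_inv _ (10 * _), mul_inv, ← hpow]
    ring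
  rw [hval] at hlim
  refine hlim.congr' ?_
  filter_upwards [hgt, hfev, hfpos, hΦ, hΦpos] with z hz h0 hfz hΦz hΦz0
  rw [← amplitude_deriv_rescale hΦz0 hfz (sub_pos.2 hz)]
  exact ((hΦz.rpow_const (Or.inl hΦz0.ne')).div
    ((h0.differentiableAt (by norm_num)).hasDerivAt.rpow_const (Or.inl hfz.ne'))
    (rpow_pos_of_pos hfz _).ne').deriv.symm

/-- at a simple turning point with `γ = −(μ²)'(z_T) > 0` and
`θ = (1/2)(μ²)''(z_T)`, the derivative of the WKB amplitude factor `Q` extends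
continuously to the turning point with limit `θ/(5γ^{7/6})`. -/
theorem wkb_amplitude_derivative_limit_at_turning_point
    (k zT : ℝ) (hk : 0 < k) (hzT : zT < 0)
    (μ : ℝ → ℝ) (hμc : ContinuousOn μ (Set.Icc zT 0))
    (hμT : μ zT = k) (hμlt : ∀ z ∈ Set.Ioc zT 0, μ z < k)
    (φ Q : ℝ → ℝ)
    (hφ : ∀ z, φ z = ∫ z' in zT..z, Real.sqrt (k ^ 2 - μ z' ^ 2))
    (hQ : ∀ z ∈ Set.Ioc zT 0,
      Q z = (3 * φ z / 2) ^ ((1 : ℝ) / 6) / (k ^ 2 - μ z ^ 2) ^ ((1 : ℝ) / 4))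
    (hμ2 : ContDiffAt ℝ 2 (fun z => μ z ^ 2) zT)
    (γ θ : ℝ) (hγ : γ = -deriv (fun z => μ z ^ 2) zT) (hγpos : 0 < γ)
    (hθ : θ = (1 / 2) * deriv (deriv (fun z => μ z ^ 2)) zT) :
    Tendsto (deriv Q) (nhdsWithin zT (Set.Ioi zT))
      (nhds (θ / (5 * γ ^ ((7 : ℝ) / 6)))) := by
  set f : ℝ → ℝ := fun z => k ^ 2 - μ z ^ 2 with hf
  have hIoo : ∀ᶠ z in 𝓝[>] zT, z ∈ Set.Ioo zT 0 := Ioo_mem_nhdsGT hzT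
  have hderiv : deriv f = fun z => -deriv (fun z => μ z ^ 2) z := by
    funext z
    exact deriv_const_sub _
  have hderiv2 : deriv (deriv f) zT = -(2 * θ) := by
    rw [hderiv, deriv.fun_neg, hθ]
    ring
  have hcont : ContinuousOn (fun z => √(f z)) (Set.Icc zT 0) :=
    (continuousOn_const.sub (hμc.pow 2)).sqrt
  have hφeq : φ = fun z => ∫ z' in zT..z, √(f z') := funext hφ
  have hΦ : ∀ᶠ z in 𝓝[>] zT,
      HasDerivAt (fun z => 3 * φ z / 2) (3 / 2 * f z ^ (1 / 2 : ℝ)) z := by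
    filter_upwards [hIoo] with z hz
    have hφz : HasDerivAt φ (√(f z)) z := by
      rw [hφeq]
      refine intervalIntegral.integral_hasDerivAt_right ?_ ?_ ?_
      · refine ContinuousOn.intervalIntegrable (hcont.mono ?_)
        rw [Set.uIcc_of_le hz.1.le]
        exact Set.Icc_subset_Icc_right hz.2.le
      · exact (hcont.mono Set.Ioo_subset_Icc_self).stronglyMeasurableAtFilter isOpen_Ioo z hz
      · exact hcont.continuousAt (Icc_mem_nhds hz.1 hz.2)
    refine ((hφz.const_mul 3).div_const 2).congr_deriv ?_
    rw [sqrt_eq_rpow]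
    ring
  have hΦ0 : Tendsto (fun z => 3 * φ z / 2) (𝓝[>] zT) (𝓝 0) := by
    have hint : IntegrableOn (fun z => √(f z)) (Set.uIcc zT 0) := by
      rw [Set.uIcc_of_le hzT.le]
      exact hcont.integrableOn_Icc
    have h := intervalIntegral.continuousOn_primitive_interval hint zT Set.left_mem_uIcc
    rw [Set.uIcc_of_le hzT.le, ← hφeq] at h
    have h' : Tendsto φ (𝓝[>] zT) (𝓝 (φ zT)) :=
      h.tendsto.mono_left (nhdsWithin_le_of_mem (mem_of_superset (Ioo_mem_nhdsGT hzT)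
        Set.Ioo_subset_Icc_self))
    rw [hφ zT, intervalIntegral.integral_same] at h'
    simpa using (h'.const_mul 3).div_const 2
  have hmain := tendsto_deriv_amplitude (f := f) (Φ := fun z => 3 * φ z / 2)
    (contDiffAt_const.sub hμ2) (by simp [hf, hμT]) (by rw [hderiv, hγ]) hγpos hΦ hΦ0
  have hval : -deriv (deriv f) zT / (10 * γ ^ (7 / 6 : ℝ)) = θ / (5 * γ ^ (7 / 6 : ℝ)) := by
    have := rpow_pos_of_pos hγpos (7 / 6)
    rw [hderiv2]
    field_simp
    ring
  rw [hval] at hmain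
  refine hmain.congr' ?_
  filter_upwards [hIoo] with z hz
  refine EventuallyEq.deriv_eq ?_
  filter_upwards [Ioo_mem_nhds hz.1 hz.2] with y hy
  exact (hQ y (Set.Ioo_subset_Ioc_self hy)).symm
end

section
/- Let J ⊂ (0, ∞) be an open interval, let z₁ < 0, and let μ : [z₁, 0] → ℝ be continuously differentiable and strictly decreasing with μ'(z) < 0 for all z. Assume that for every ω ∈ J there exists z_T(ω) ∈ (z₁, 0) with μ(z_T(ω)) = ω, so that μ(z) < ω for z ∈ (z_T(ω), 0]. Then the function ω ↦ φ_ω(0) := ∫_{z_T(ω)}^0 √(ω² − μ(z)²) dz is differentiable on J, the improper integral ∫_{z_T(ω)}^0 ω / √(ω² − μ(z)²) dz converges, and (d/dω) φ_ω(0) = ∫_{z_T(ω)}^0 ω / √(ω² − μ(z)²) dz for every ω ∈ J. -/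
open MeasureTheory Real

open scoped Topology

/-- Since `√x = 0` for `x ≤ 0`, the quotient bound for the square root holds on all of `ℝ`. -/
lemma abs_sqrt_sub_sqrt_le {a : ℝ} (ha : a ≠ 0) (b : ℝ) :
    |√b - √a| ≤ |b - a| / √|a| := by
  have hpos : 0 < √|a| := Real.sqrt_pos.2 (abs_pos.2 ha)
  rw [le_div_iff₀ hpos]
  rcases lt_or_gt_of_ne ha with h | h
  · rw [Real.sqrt_eq_zero_of_nonpos h.le, sub_zero, abs_of_nonneg (Real.sqrt_nonneg b),
      abs_of_neg h]
    rcases le_or_gt b 0 with hb | hb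
    · simp [Real.sqrt_eq_zero_of_nonpos hb]
    · rw [abs_of_pos (by linarith)]
      have h1 := Real.sq_sqrt hb.le
      have h2 := Real.sq_sqrt (neg_pos.2 h).le
      nlinarith [sq_nonneg (√b - √(-a))]
  · rw [abs_of_pos h] at hpos ⊢
    have h2 := Real.sq_sqrt h.le
    rcases le_or_gt b 0 with hb | hb
    · rw [Real.sqrt_eq_zero_of_nonpos hb, zero_sub, abs_neg, abs_of_pos hpos,
        abs_of_neg (by linarith)]
      nlinarith
    · have h1 := Real.sq_sqrt hb.le
      have : b - a = (√b - √a) * (√b + √a) := by linear_combination h2 - h1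
      rw [this, abs_mul, abs_of_nonneg (add_nonneg (Real.sqrt_nonneg b) hpos.le)]
      have := Real.sqrt_nonneg b
      gcongr
      linarith

/-- The derivative of `x ↦ √(x² - m²)`; where `x² < m²` both sides vanish by convention. -/
lemma hasDerivAt_sqrt_sq_sub_sq {x m : ℝ} (h : x ^ 2 - m ^ 2 ≠ 0) :
    HasDerivAt (fun y => √(y ^ 2 - m ^ 2)) (x / √(x ^ 2 - m ^ 2)) x := by
  have h1 : HasDerivAt (fun y : ℝ => y ^ 2 - m ^ 2) (2 * x) x := by
    simpa using (hasDerivAt_pow 2 x).sub_const (m ^ 2)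
  convert h1.sqrt h using 1
  rw [mul_div_mul_left _ _ two_ne_zero]

lemma intervalIntegrable_inv_sqrt (a b : ℝ) :
    IntervalIntegrable (fun x => (√x)⁻¹) volume a b := by
  have h := intervalIntegral.intervalIntegrable_rpow' (a := a) (b := b)
    (show (-1 : ℝ) < -(1 / 2) by norm_num)
  refine h.congr fun x _ => ?_
  rcases le_or_gt 0 x with hx | hx
  · simp only [Real.rpow_neg hx, Real.sqrt_eq_rpow]
  · simp only [Real.sqrt_eq_zero_of_nonpos hx.le, inv_zero, Real.rpow_def_of_neg hx]
    rw [show -(1 / 2) * π = -(π / 2) by ring, Real.cos_neg, Real.cos_pi_div_two, mul_zero]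

lemma intervalIntegrable_inv_sqrt_abs_sub (p a b : ℝ) :
    IntervalIntegrable (fun x => (√|x - p|)⁻¹) volume a b := by
  have h1 := (intervalIntegrable_inv_sqrt (a - p) (b - p)).comp_sub_right p
  have h2 := (intervalIntegrable_inv_sqrt (p - a) (p - b)).comp_sub_left p
  simp only [sub_add_cancel, sub_sub_cancel] at h1 h2
  refine (h1.add h2).congr fun x _ => ?_
  rcases le_total p x with hx | hx
  · simp [abs_of_nonneg (sub_nonneg.2 hx), Real.sqrt_eq_zero_of_nonpos (sub_nonpos.2 hx)]
  · simp [abs_of_nonpos (sub_nonpos.2 hx), Real.sqrt_eq_zero_of_nonpos (sub_nonpos.2 hx)]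

/-- A `C¹` function with negative derivative on a compact interval decreases at a uniform rate. -/
lemma exists_pos_mul_sub_le_of_deriv_neg {f f' : ℝ → ℝ} {a b : ℝ} (hab : a ≤ b)
    (hf : ∀ z ∈ Set.Icc a b, HasDerivAt f (f' z) z) (hf'c : ContinuousOn f' (Set.Icc a b))
    (hf'neg : ∀ z ∈ Set.Icc a b, f' z < 0) :
    ∃ c > 0, ∀ x ∈ Set.Icc a b, ∀ y ∈ Set.Icc a b, x ≤ y → c * (y - x) ≤ f x - f y := by
  obtain ⟨m, hm, hmax⟩ := isCompact_Icc.exists_isMaxOn (Set.nonempty_Icc.2 hab) hf'c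
  refine ⟨-f' m, neg_pos.2 (hf'neg m hm), fun x hx y hy hxy => ?_⟩
  have hsub : interior (Set.Icc a b) ⊆ Set.Icc a b := interior_subset
  have := (convex_Icc a b).image_sub_le_mul_sub_of_deriv_le
    (fun z hz => (hf z hz).continuousAt.continuousWithinAt)
    (fun z hz => (hf z (hsub hz)).differentiableAt.differentiableWithinAt)
    (C := f' m) (fun z hz => by rw [(hf z (hsub hz)).deriv]; exact hmax (hsub hz)) x hx y hy hxy
  linarith

/-- Every value is missed at a linear rate away from some point of the interval. -/
lemma exists_mul_abs_sub_le {f : ℝ → ℝ} {a b c : ℝ} (hab : a ≤ b)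
    (hf : ContinuousOn f (Set.Icc a b))
    (hc : ∀ x ∈ Set.Icc a b, ∀ y ∈ Set.Icc a b, x ≤ y → c * (y - x) ≤ f x - f y) (v : ℝ) :
    ∃ p, ∀ z ∈ Set.Icc a b, c * |z - p| ≤ |f z - v| := by
  have ha := Set.left_mem_Icc.2 hab
  have hb := Set.right_mem_Icc.2 hab
  rcases lt_or_ge (f a) v with h | h
  · refine ⟨a, fun z hz => ?_⟩
    have := hc a ha z hz hz.1
    rw [abs_of_nonneg (sub_nonneg.2 hz.1)]
    linarith [neg_le_abs (f z - v)]
  rcases lt_or_ge v (f b) with h' | h'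
  · refine ⟨b, fun z hz => ?_⟩
    have := hc z hz b hb hz.2
    rw [abs_of_nonpos (sub_nonpos.2 hz.2)]
    linarith [le_abs_self (f z - v)]
  obtain ⟨p, hp, rfl⟩ := intermediate_value_Icc' hab hf ⟨h', h⟩
  refine ⟨p, fun z hz => ?_⟩
  rcases le_total z p with hzp | hzp
  · have := hc z hz p hp hzp
    rw [abs_of_nonpos (sub_nonpos.2 hzp)]
    linarith [le_abs_self (f z - f p)]
  · have := hc p hp z hz hzp
    rw [abs_of_nonneg (sub_nonneg.2 hzp)]
    linarith [neg_le_abs (f z - f p)]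

lemma integrableOn_inv_sqrt_abs_sub {f : ℝ → ℝ} {a b c p v : ℝ} (hab : a ≤ b) (hc0 : 0 < c)
    (hf : ContinuousOn f (Set.Icc a b))
    (hp : ∀ z ∈ Set.Icc a b, c * |z - p| ≤ |f z - v|) :
    IntegrableOn (fun z => (√|f z - v|)⁻¹) (Set.Ioc a b) := by
  have h1 := (intervalIntegrable_iff_integrableOn_Ioc_of_le hab).1
    ((intervalIntegrable_inv_sqrt_abs_sub p a b).const_mul (√c)⁻¹)
  have hm : AEMeasurable f (volume.restrict (Set.Ioc a b)) :=
    (hf.mono Set.Ioc_subset_Icc_self).aemeasurable measurableSet_Ioc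
  refine h1.mono' (by fun_prop) ?_
  filter_upwards [ae_restrict_mem measurableSet_Ioc, Measure.ae_ne _ p] with z hz hzp
  have hpos : 0 < |z - p| := abs_pos.2 (sub_ne_zero.2 hzp)
  rw [Real.norm_of_nonneg (by positivity), ← mul_inv, ← Real.sqrt_mul hc0.le]
  gcongr
  exact hp z (Set.Ioc_subset_Icc_self hz)

lemma inv_sqrt_abs_sq_sub_sq_le {w m : ℝ} (hw : 0 < w) (h1 : m ≠ w) (h2 : m ≠ -w) :
    (√|w ^ 2 - m ^ 2|)⁻¹ ≤ (√w)⁻¹ * ((√|m - w|)⁻¹ + (√|m - -w|)⁻¹) := by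
  have p1 : 0 < |m - w| := abs_pos.2 (sub_ne_zero.2 h1)
  have p2 : 0 < |m - -w| := abs_pos.2 (sub_ne_zero.2 h2)
  have e : |w ^ 2 - m ^ 2| = |m - w| * |m - -w| := by
    rw [← abs_mul, abs_sub_comm]; ring_nf
  rw [e, Real.sqrt_mul p1.le, mul_inv, mul_add]
  rcases le_total 0 m with hm | hm
  · have hle : w ≤ |m - -w| := by linarith [le_abs_self (m - -w)]
    have : (√|m - -w|)⁻¹ ≤ (√w)⁻¹ := by gcongr
    have : (√|m - w|)⁻¹ * (√|m - -w|)⁻¹ ≤ (√|m - w|)⁻¹ * (√w)⁻¹ := by gcongr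
    have : 0 ≤ (√w)⁻¹ * (√|m - -w|)⁻¹ := by positivity
    linarith
  · have hle : w ≤ |m - w| := by linarith [neg_le_abs (m - w)]
    have : (√|m - w|)⁻¹ * (√|m - -w|)⁻¹ ≤ (√w)⁻¹ * (√|m - -w|)⁻¹ := by gcongr
    have : 0 ≤ (√w)⁻¹ * (√|m - w|)⁻¹ := by positivity
    linarith

/-- Differentiation under the integral sign, with the increment dominated only at the base
point. -/
lemma hasDerivAt_integral_of_dominated_increment {α : Type*} [MeasurableSpace α] {ν : Measure α}
    {F : ℝ → α → ℝ} {F' bound : α → ℝ} {x₀ : ℝ} {s : Set ℝ} (hs : s ∈ 𝓝 x₀)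
    (hF_meas : ∀ x ∈ s, AEStronglyMeasurable (F x) ν) (hF_int : Integrable (F x₀) ν)
    (hF'_meas : AEStronglyMeasurable F' ν)
    (h_lipsch : ∀ᵐ a ∂ν, ∀ x ∈ s, ‖F x a - F x₀ a‖ ≤ bound a * ‖x - x₀‖)
    (bound_integrable : Integrable bound ν)
    (h_diff : ∀ᵐ a ∂ν, HasDerivAt (F · a) (F' a) x₀) :
    Integrable F' ν ∧ HasDerivAt (fun x => ∫ a, F x a ∂ν) (∫ a, F' a ∂ν) x₀ := by
  set L : ℝ →L[ℝ] ℝ →L[ℝ] ℝ := ContinuousLinearMap.smulRightL ℝ ℝ ℝ 1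
  have hm : AEStronglyMeasurable (L ∘ F') ν := L.continuous.comp_aestronglyMeasurable hF'_meas
  obtain ⟨hF'_int, key⟩ := hasFDerivAt_integral_of_dominated_loc_of_lip'
    hs hF_meas hF_int hm h_lipsch bound_integrable (h_diff.mono fun x hx => hx.hasFDerivAt)
  replace hF'_int : Integrable F' ν := by
    rw [← integrable_norm_iff hm] at hF'_int
    exact (integrable_norm_iff hF'_meas).1 (by simpa [L, (· ∘ ·)] using! hF'_int)
  refine ⟨hF'_int, ?_⟩
  simp_rw [hasDerivAt_iff_hasFDerivAt] at h_diff ⊢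
  simpa only [(· ∘ ·), ContinuousLinearMap.integral_comp_comm _ hF'_int] using! key

lemma intervalIntegral_eq_setIntegral_of_eq_zero {g : ℝ → ℝ} {a p b : ℝ} (hap : a ≤ p)
    (hpb : p ≤ b) (hg : ∀ z ∈ Set.Ioc a p, g z = 0) :
    ∫ z in p..b, g z = ∫ z in Set.Ioc a b, g z := by
  rw [intervalIntegral.integral_of_le hpb]
  refine (setIntegral_eq_of_subset_of_forall_sdiff_eq_zero measurableSet_Ioc
    (Set.Ioc_subset_Ioc_left hap) fun z hz => hg z ⟨hz.1.1, ?_⟩).symm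
  by_contra! h
  exact hz.2 ⟨h, hz.1.2⟩

/-- the WKB phase `φ_ω(0) = ∫_{z_T(ω)}^0 √(ω² − μ(z)²) dz` is differentiable
in the frequency `ω`, the improper integral `∫_{z_T(ω)}^0 ω/√(ω² − μ(z)²) dz` converges,
and the derivative of the phase equals that integral (half the round-trip travel time). -/
theorem wkb_phase_frequency_derivative
    (ω₁ ω₂ : ℝ) (hω₁ : 0 < ω₁) (hJ : ω₁ < ω₂)
    (z₁ : ℝ) (hz₁ : z₁ < 0)
    (μ μ' : ℝ → ℝ)
    (hμ : ∀ z ∈ Set.Icc z₁ 0, HasDerivAt μ (μ' z) z)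
    (hμ'c : ContinuousOn μ' (Set.Icc z₁ 0))
    (hμ'neg : ∀ z ∈ Set.Icc z₁ 0, μ' z < 0)
    (hμanti : StrictAntiOn μ (Set.Icc z₁ 0))
    (zT : ℝ → ℝ)
    (hzT : ∀ ω ∈ Set.Ioo ω₁ ω₂, zT ω ∈ Set.Ioo z₁ 0 ∧ μ (zT ω) = ω ∧
      ∀ z ∈ Set.Ioc (zT ω) 0, μ z < ω) :
    ∀ ω ∈ Set.Ioo ω₁ ω₂,
      IntegrableOn (fun z => ω / Real.sqrt (ω ^ 2 - μ z ^ 2)) (Set.Ioc (zT ω) 0) ∧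
      HasDerivAt (fun ω' => ∫ z in (zT ω')..0, Real.sqrt (ω' ^ 2 - μ z ^ 2))
        (∫ z in (zT ω)..0, ω / Real.sqrt (ω ^ 2 - μ z ^ 2)) ω := by
  intro ω hω
  have hω0 : 0 < ω := hω₁.trans hω.1
  have hμcont : ContinuousOn μ (Set.Icc z₁ 0) :=
    fun z hz => (hμ z hz).continuousAt.continuousWithinAt
  have hm : AEMeasurable μ (volume.restrict (Set.Ioc z₁ 0)) :=
    (hμcont.mono Set.Ioc_subset_Icc_self).aemeasurable measurableSet_Ioc
  -- Left of the turning point the square root vanishes.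
  have hzero : ∀ w ∈ Set.Ioo ω₁ ω₂, ∀ z ∈ Set.Ioc z₁ (zT w), √(w ^ 2 - μ z ^ 2) = 0 := by
    intro w hw z hz
    obtain ⟨hT, hTw, -⟩ := hzT w hw
    have hle : w ≤ μ z := hTw ▸ hμanti.antitoneOn ⟨hz.1.le, hz.2.trans hT.2.le⟩
      ⟨hT.1.le, hT.2.le⟩ hz.2
    have hw0 : 0 < w := hω₁.trans hw.1
    exact Real.sqrt_eq_zero_of_nonpos (by nlinarith)
  obtain ⟨c, hc0, hc⟩ := exists_pos_mul_sub_le_of_deriv_neg hz₁.le hμ hμ'c hμ'neg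
  obtain ⟨p, hp⟩ := exists_mul_abs_sub_le hz₁.le hμcont hc ω
  obtain ⟨q, hq⟩ := exists_mul_abs_sub_le hz₁.le hμcont hc (-ω)
  have hne : ∀ᵐ z ∂volume.restrict (Set.Ioc z₁ 0), μ z ≠ ω ∧ μ z ≠ -ω := by
    have key : ∀ r v, (∀ z ∈ Set.Icc z₁ 0, c * |z - r| ≤ |μ z - v|) →
        ∀ z ∈ Set.Icc z₁ 0, z ≠ r → μ z ≠ v := by
      intro r v h z hz hzr hv
      have h1 := h z hz
      have : 0 < c * |z - r| := mul_pos hc0 (abs_pos.2 (sub_ne_zero.2 hzr))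
      rw [hv, sub_self, abs_zero] at h1
      linarith
    filter_upwards [ae_restrict_mem measurableSet_Ioc, Measure.ae_ne _ p, Measure.ae_ne _ q]
      with z hz hzp hzq
    exact ⟨key p ω hp z (Set.Ioc_subset_Icc_self hz) hzp,
      key q (-ω) hq z (Set.Ioc_subset_Icc_self hz) hzq⟩
  have hsq : ∀ z, μ z ≠ ω ∧ μ z ≠ -ω → ω ^ 2 - μ z ^ 2 ≠ 0 := fun z h h0 =>
    (sq_eq_sq_iff_eq_or_eq_neg.1 (sub_eq_zero.1 h0).symm).elim h.1 h.2
  have hbound : IntegrableOn (fun z => 2 * ω₂ *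
      ((√ω)⁻¹ * ((√|μ z - ω|)⁻¹ + (√|μ z - -ω|)⁻¹))) (Set.Ioc z₁ 0) :=
    (((integrableOn_inv_sqrt_abs_sub hz₁.le hc0 hμcont hp).add
      (integrableOn_inv_sqrt_abs_sub hz₁.le hc0 hμcont hq)).const_mul _).const_mul _
  have hF_int : IntegrableOn (fun z => √(ω ^ 2 - μ z ^ 2)) (Set.Ioc z₁ 0) :=
    (ContinuousOn.integrableOn_Icc (by fun_prop)).mono_set Set.Ioc_subset_Icc_self
  obtain ⟨hint, hder⟩ := hasDerivAt_integral_of_dominated_increment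
    (ν := volume.restrict (Set.Ioc z₁ 0)) (F := fun w z => √(w ^ 2 - μ z ^ 2))
    (F' := fun z => ω / √(ω ^ 2 - μ z ^ 2)) (Ioo_mem_nhds hω.1 hω.2)
    (fun w _ => by fun_prop) hF_int
    (AEMeasurable.aestronglyMeasurable (by fun_prop))
    (by
      filter_upwards [hne] with z hz w hw
      have h1 := abs_sqrt_sub_sqrt_le (hsq z hz) (w ^ 2 - μ z ^ 2)
      have h2 := inv_sqrt_abs_sq_sub_sq_le hω0 hz.1 hz.2
      have hw0 : 0 < w := hω₁.trans hw.1
      have hω₂ : 0 < ω₂ := hω0.trans hω.2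
      have h3 : |w ^ 2 - μ z ^ 2 - (ω ^ 2 - μ z ^ 2)| ≤ 2 * ω₂ * |w - ω| := by
        rw [show w ^ 2 - μ z ^ 2 - (ω ^ 2 - μ z ^ 2) = (w + ω) * (w - ω) by ring, abs_mul,
          abs_of_pos (by linarith)]
        gcongr
        linarith [hw.2, hω.2]
      rw [Real.norm_eq_abs, Real.norm_eq_abs]
      calc _ ≤ _ := h1
        _ = |w ^ 2 - μ z ^ 2 - (ω ^ 2 - μ z ^ 2)| * (√|ω ^ 2 - μ z ^ 2|)⁻¹ := div_eq_mul_inv _ _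
        _ ≤ (2 * ω₂ * |w - ω|) * ((√ω)⁻¹ * ((√|μ z - ω|)⁻¹ + (√|μ z - -ω|)⁻¹)) := by gcongr
        _ = _ := by ring)
    hbound (hne.mono fun z hz => hasDerivAt_sqrt_sq_sub_sq (hsq z hz))
  obtain ⟨hT, -, -⟩ := hzT ω hω
  refine ⟨IntegrableOn.mono_set hint (Set.Ioc_subset_Ioc_left hT.1.le), ?_⟩
  rw [intervalIntegral_eq_setIntegral_of_eq_zero hT.1.le hT.2.le
    fun z hz => by rw [hzero ω hω z hz, div_zero]]
  refine hder.congr_of_eventuallyEq ?_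
  filter_upwards [Ioo_mem_nhds hω.1 hω.2] with w hw
  obtain ⟨hTw, -, -⟩ := hzT w hw
  exact intervalIntegral_eq_setIntegral_of_eq_zero hTw.1.le hTw.2.le (hzero w hw)
end

section
/- Let k > 0, z_T < 0, and let μ : [z_T, 0] → ℝ be continuous with μ(z_T) = k and μ(z) < k for z ∈ (z_T, 0]. Define φ(z) = ∫_{z_T}^z √(k² − μ(z')²) dz' for z ∈ [z_T, 0]. Assume moreover that z ↦ μ(z)² is continuously differentiable on a neighborhood of z_T with γ := −(d/dz)[μ²](z_T) > 0. Then the improper integrals ∫_{z_T}^z (k² − μ(z')²)^{−1/2} dz' converge for z ∈ (z_T, 0] close to z_T, and lim_{z → z_T⁺} (3φ(z)/2)^{−1/3} · ∫_{z_T}^z (k² − μ(z')²)^{−1/2} dz' = 2 γ^{−2/3}. -/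
open MeasureTheory Real Filter

lemma intervalIntegrable_sub_rpow {p : ℝ} (hp : -1 < p) (a z : ℝ) :
    IntervalIntegrable (fun x => (x - a) ^ p) volume a z := by
  have h := (intervalIntegral.intervalIntegrable_rpow' (a := 0) (b := z - a) hp).comp_sub_right a
  simpa using h

lemma integral_sub_rpow {p : ℝ} (hp : -1 < p) (a z : ℝ) :
    ∫ x in a..z, (x - a) ^ p = (z - a) ^ (p + 1) / (p + 1) := by
  rw [intervalIntegral.integral_comp_sub_right (fun x => x ^ p), integral_rpow (Or.inl hp), sub_self,
    Real.zero_rpow (by linarith), sub_zero]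

/-- A function asymptotic to `L * (x - a) ^ p` with `p > -1` as `x → a⁺` is integrable near `a`. -/
lemma eventually_integrableOn_of_tendsto_div_rpow {g : ℝ → ℝ} {a b p L : ℝ} (hab : a < b)
    (hp : -1 < p) (hg : ContinuousOn g (Set.Ioc a b))
    (hL : Tendsto (fun x => g x / (x - a) ^ p) (nhdsWithin a (Set.Ioi a)) (nhds L)) :
    ∀ᶠ z in nhdsWithin a (Set.Ioi a), IntegrableOn g (Set.Ioc a z) := by
  have hbd : ∀ᶠ x in nhdsWithin a (Set.Ioi a), |g x / (x - a) ^ p| < |L| + 1 :=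
    hL.abs.eventually_lt_const (by linarith)
  obtain ⟨c, hac, hc⟩ := mem_nhdsGT_iff_exists_Ioo_subset.1 hbd
  have hac : a < c := hac
  filter_upwards [Ioo_mem_nhdsGT hac, Ioo_mem_nhdsGT hab] with z hzc hzb
  have hw := (intervalIntegrable_iff_integrableOn_Ioc_of_le hzc.1.le).1
    (intervalIntegrable_sub_rpow hp a z)
  refine (hw.const_mul (|L| + 1)).mono'
    ((hg.mono (Set.Ioc_subset_Ioc_right hzb.2.le)).aestronglyMeasurable measurableSet_Ioc) ?_
  filter_upwards [ae_restrict_mem measurableSet_Ioc] with x hx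
  have hxp : 0 < (x - a) ^ p := Real.rpow_pos_of_pos (sub_pos.2 hx.1) p
  have h : |g x / (x - a) ^ p| < |L| + 1 := hc ⟨hx.1, hx.2.trans_lt hzc.2⟩
  rw [abs_div, abs_of_pos hxp, div_lt_iff₀ hxp] at h
  exact h.le

/-- The asymptotics `g x ∼ L * (x - a) ^ p` as `x → a⁺`, with `p > -1`, can be integrated. -/
lemma tendsto_integral_div_rpow {g : ℝ → ℝ} {a b p L : ℝ} (hab : a < b)
    (hp : -1 < p) (hg : ContinuousOn g (Set.Ioc a b))
    (hL : Tendsto (fun x => g x / (x - a) ^ p) (nhdsWithin a (Set.Ioi a)) (nhds L)) :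
    Tendsto (fun z => (∫ x in a..z, g x) / (z - a) ^ (p + 1)) (nhdsWithin a (Set.Ioi a))
      (nhds (L / (p + 1))) := by
  have hp1 : 0 < p + 1 := by linarith
  rw [Metric.tendsto_nhds]
  intro ε hε
  set δ := ε * (p + 1) / 2 with hδ
  have hδ0 : 0 < δ := by positivity
  obtain ⟨c, hac, hc⟩ := mem_nhdsGT_iff_exists_Ioo_subset.1 (Metric.tendsto_nhds.1 hL δ hδ0)
  have hac : a < c := hac
  filter_upwards [Ioo_mem_nhdsGT hac,
    eventually_integrableOn_of_tendsto_div_rpow hab hp hg hL] with z hz hgz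
  have hwi := intervalIntegrable_sub_rpow hp a z
  have hgi := (intervalIntegrable_iff_integrableOn_Ioc_of_le hz.1.le).2 hgz
  have hle : ‖∫ x in a..z, (g x - L * (x - a) ^ p)‖ ≤ ∫ x in a..z, δ * (x - a) ^ p := by
    refine intervalIntegral.norm_integral_le_of_norm_le hz.1.le (ae_of_all _ fun x hx => ?_)
      (hwi.const_mul δ)
    have hxp : 0 < (x - a) ^ p := Real.rpow_pos_of_pos (sub_pos.2 hx.1) p
    have h : dist (g x / (x - a) ^ p) L < δ := hc ⟨hx.1, hx.2.trans_lt hz.2⟩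
    rw [Real.dist_eq, div_sub' hxp.ne', abs_div, abs_of_pos hxp, div_lt_iff₀ hxp, mul_comm _ L] at h
    exact h.le
  rw [intervalIntegral.integral_sub hgi (hwi.const_mul L), intervalIntegral.integral_const_mul,
    intervalIntegral.integral_const_mul, integral_sub_rpow hp, Real.norm_eq_abs] at hle
  have hzp : 0 < (z - a) ^ (p + 1) := Real.rpow_pos_of_pos (sub_pos.2 hz.1) _
  have heq : (∫ x in a..z, g x) / (z - a) ^ (p + 1) - L / (p + 1) =
      ((∫ x in a..z, g x) - L * ((z - a) ^ (p + 1) / (p + 1))) / (z - a) ^ (p + 1) := by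
    field_simp
  rw [Real.dist_eq, heq, abs_div, abs_of_pos hzp, div_lt_iff₀ hzp]
  refine hle.trans_lt ?_
  have : δ * ((z - a) ^ (p + 1) / (p + 1)) = ε / 2 * (z - a) ^ (p + 1) := by
    rw [hδ]; field_simp
  rw [this]
  exact mul_lt_mul_of_pos_right (by linarith) hzp

/-- If `f x ∼ c * (x - a)` with `c > 0` as `x → a⁺`, then `f x ^ p ∼ c ^ p * (x - a) ^ p`. -/
lemma tendsto_rpow_div_rpow {f : ℝ → ℝ} {a c : ℝ} (hc : 0 < c) (p : ℝ)
    (hf : Tendsto (fun x => f x / (x - a)) (nhdsWithin a (Set.Ioi a)) (nhds c)) :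
    Tendsto (fun x => f x ^ p / (x - a) ^ p) (nhdsWithin a (Set.Ioi a)) (nhds (c ^ p)) := by
  refine (hf.rpow_const (p := p) (Or.inl hc.ne')).congr' ?_
  filter_upwards [hf.eventually_const_lt hc, self_mem_nhdsWithin] with x hx hxa
  have hxa : 0 < x - a := sub_pos.2 hxa
  exact Real.div_rpow ((div_pos_iff_of_pos_right hxa).1 hx).le hxa.le p

/-- near a simple turning point (`γ = −(μ²)'(z_T) > 0`), the improper
integrals `∫_{z_T}^z (k²−μ²)^{−1/2}` converge for `z > z_T` close to `z_T`, and
`(3φ(z)/2)^{−1/3} ∫_{z_T}^z (k²−μ²)^{−1/2} → 2γ^{−2/3}` as `z → z_T⁺`. -/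
theorem turning_point_phase_ratio_limit
    (k zT : ℝ) (hk : 0 < k) (hzT : zT < 0)
    (μ : ℝ → ℝ) (hμc : ContinuousOn μ (Set.Icc zT 0))
    (hμT : μ zT = k) (hμlt : ∀ z ∈ Set.Ioc zT 0, μ z < k)
    (φ : ℝ → ℝ)
    (hφ : ∀ z ∈ Set.Icc zT 0, φ z = ∫ z' in zT..z, Real.sqrt (k ^ 2 - μ z' ^ 2))
    (hμ2 : ContDiffAt ℝ 1 (fun z => μ z ^ 2) zT)
    (γ : ℝ) (hγ : γ = -deriv (fun z => μ z ^ 2) zT) (hγpos : 0 < γ) :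
    (∀ᶠ z in nhdsWithin zT (Set.Ioi zT),
      IntegrableOn (fun z' => (k ^ 2 - μ z' ^ 2) ^ (-(1 : ℝ) / 2)) (Set.Ioc zT z)) ∧
    Tendsto (fun z => (3 * φ z / 2) ^ (-(1 : ℝ) / 3) *
        ∫ z' in zT..z, (k ^ 2 - μ z' ^ 2) ^ (-(1 : ℝ) / 2))
      (nhdsWithin zT (Set.Ioi zT)) (nhds (2 * γ ^ (-(2 : ℝ) / 3))) := by
  set f : ℝ → ℝ := fun z => k ^ 2 - μ z ^ 2 with hf
  have hderiv : HasDerivAt f γ zT := by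
    have h := (hμ2.differentiableAt one_ne_zero).hasDerivAt.const_sub (k ^ 2)
    rwa [← hγ] at h
  have hf_lim : Tendsto (fun x => f x / (x - zT)) (nhdsWithin zT (Set.Ioi zT)) (nhds γ) := by
    refine ((hasDerivAt_iff_tendsto_slope.1 hderiv).mono_left
      (nhdsWithin_mono _ fun x hx => ne_of_gt hx)).congr fun x => ?_
    simp [slope_def_field, hf, hμT]
  have hfpos : ∀ᶠ x in nhdsWithin zT (Set.Ioi zT), 0 < f x := by
    filter_upwards [hf_lim.eventually_const_lt hγpos, self_mem_nhdsWithin] with x hx hxa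
    exact (div_pos_iff_of_pos_right (sub_pos.2 hxa)).1 hx
  obtain ⟨c, hc, hcf⟩ := mem_nhdsGT_iff_exists_Ioo_subset.1 hfpos
  have hc : zT < c := hc
  obtain ⟨b, hb, hbm⟩ := exists_between (lt_min hc hzT)
  have hbc : b < c := hbm.trans_le (min_le_left _ _)
  have hb0 : b < 0 := hbm.trans_le (min_le_right _ _)
  have hfc : ContinuousOn f (Set.Ioc zT b) :=
    continuousOn_const.sub ((hμc.mono fun x hx => ⟨hx.1.le, hx.2.trans hb0.le⟩).pow 2)
  have hpow (p : ℝ) : ContinuousOn (fun x => f x ^ p) (Set.Ioc zT b) :=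
    hfc.rpow_const fun x hx => Or.inl (ne_of_gt (hcf ⟨hx.1, hx.2.trans_lt hbc⟩))
  have hinv := tendsto_rpow_div_rpow hγpos (-(1 : ℝ) / 2) hf_lim
  refine ⟨eventually_integrableOn_of_tendsto_div_rpow hb (by norm_num) (hpow _) hinv, ?_⟩
  have hI := tendsto_integral_div_rpow hb (by norm_num) (hpow _) hinv
  have hφ_lim : Tendsto (fun z => 3 * φ z / 2 / (z - zT) ^ ((3 : ℝ) / 2))
      (nhdsWithin zT (Set.Ioi zT)) (nhds (γ ^ ((1 : ℝ) / 2))) := by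
    have h := (tendsto_integral_div_rpow hb (by norm_num) (hpow _)
      (tendsto_rpow_div_rpow hγpos ((1 : ℝ) / 2) hf_lim)).const_mul (3 / 2)
    norm_num1 at h
    rw [show (3 : ℝ) / 2 * (γ ^ ((1 : ℝ) / 2) / (3 / 2)) = γ ^ ((1 : ℝ) / 2) by ring] at h
    refine h.congr' ?_
    filter_upwards [Ioo_mem_nhdsGT hzT] with z hz
    simp only [hφ z ⟨hz.1.le, hz.2.le⟩, Real.sqrt_eq_rpow, hf]
    ring
  have hcube := hφ_lim.rpow_const (p := -(1 : ℝ) / 3) (Or.inl (by positivity))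
  have hprod := hcube.mul hI
  have hval : (γ ^ ((1 : ℝ) / 2)) ^ (-(1 : ℝ) / 3) *
      (γ ^ (-(1 : ℝ) / 2) / (-(1 : ℝ) / 2 + 1)) = 2 * γ ^ (-(2 : ℝ) / 3) := by
    rw [← Real.rpow_mul hγpos.le, ← mul_div_assoc, ← Real.rpow_add hγpos]
    norm_num
    ring
  rw [hval] at hprod
  refine hprod.congr' ?_
  filter_upwards [hφ_lim.eventually_const_lt (Real.rpow_pos_of_pos hγpos _),
    self_mem_nhdsWithin] with z hz hza
  have hza : 0 < z - zT := sub_pos.2 hza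
  have hden : 0 < (z - zT) ^ ((3 : ℝ) / 2) := Real.rpow_pos_of_pos hza _
  rw [Real.div_rpow ((div_pos_iff_of_pos_right hden).1 hz).le hden.le, ← Real.rpow_mul hza.le,
    div_mul_div_comm, ← Real.rpow_add hza]
  norm_num [hf]
end
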